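/- arXiv:1801.04701 — 2 statements merged into one kernel-verified Lean document; each statement's English description precedes it below -/
import Mathlib

section
/- Let β_1,...,β_n be real numbers (n ≥ 1) and let k be an integer with 1 ≤ k ≤ n. Define f(μ) = kμ + Σ_{j=1}^n [β_j − μ]_+ for μ ∈ ℝ. Then f attains its global minimum over ℝ at μ = β_[k], and its minimum value equals Σ_{j=1}^k β_[j], the sum of the k largest entries. -/
/-!
The sum `∑ j, [β j - μ]₊` does not depend on the order of the entries, so it may be taken over the
sorted values `b₁ ≥ ... ≥ bₙ` (`sum_kthLargest`). Distributing `k * μ` over the first `k` terms,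
`f μ = ∑_{i ≤ k} (μ + [bᵢ - μ]₊) + ∑_{i > k} [bᵢ - μ]₊`. Since `μ + [bᵢ - μ]₊ = max bᵢ μ ≥ bᵢ`,
this is at least `∑_{i ≤ k} bᵢ` for every `μ`. At `μ = b_k` equality holds, because `bᵢ ≥ b_k` for
`i ≤ k` and `bᵢ ≤ b_k` for `i > k` (`kthLargest_anti`).
-/

/-- The `k`-th largest value among `v 1, ..., v n` (1-indexed `k`). -/
noncomputable def kthLargest {n : ℕ} (v : Fin n → ℝ) (k : ℕ) : ℝ :=
  ((List.ofFn v).insertionSort (· ≥ ·)).getD (k - 1) 0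

/-- Symmetric sums can be evaluated on the sorted values, since sorting is a permutation. -/
lemma sum_kthLargest {n : ℕ} (β : Fin n → ℝ) (g : ℝ → ℝ) :
    ∑ j, g (β j) = ∑ i ∈ Finset.range n, g (kthLargest β (i + 1)) := by
  have hlen : ((List.ofFn β).insertionSort (· ≥ ·)).length = n := by simp
  have hperm := ((List.perm_insertionSort (· ≥ ·) (List.ofFn β)).map g).sum_eq
  rw [List.map_ofFn, List.sum_ofFn] at hperm
  simp only [Function.comp_apply] at hperm
  rw [← hperm]
  unfold kthLargest
  generalize (List.ofFn β).insertionSort (· ≥ ·) = l at hlen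
  subst hlen
  rw [← Fin.sum_univ_fun_getElem, Finset.sum_range]
  exact Finset.sum_congr rfl fun i _ => by simp

lemma kthLargest_anti {n : ℕ} (β : Fin n → ℝ) {i j : ℕ} (hij : i ≤ j) (hj : j < n) :
    kthLargest β (j + 1) ≤ kthLargest β (i + 1) := by
  have hlen : ((List.ofFn β).insertionSort (· ≥ ·)).length = n := by simp
  have hsort := List.pairwise_insertionSort (· ≥ ·) (List.ofFn β)
  unfold kthLargest
  generalize (List.ofFn β).insertionSort (· ≥ ·) = l at hlen hsort
  subst hlen
  rcases hij.eq_or_lt with rfl | hlt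
  · exact le_rfl
  · have := List.pairwise_iff_getElem.1 hsort i j (hlt.trans hj) hj hlt
    simpa [List.getD_eq_getElem, hj, hlt.trans hj] using this

/-- `f(μ) = kμ + Σ_j [β_j − μ]_+` attains its global minimum at `μ = β_[k]`,
with minimum value the sum of the `k` largest entries of `β`. -/
theorem kmu_plus_pospart_min_at_kth_largest
    (n k : ℕ) (hn : 1 ≤ n) (hk1 : 1 ≤ k) (hkn : k ≤ n) (β : Fin n → ℝ)
    (f : ℝ → ℝ) (hf : ∀ μ, f μ = (k : ℝ) * μ + ∑ j, max (β j - μ) 0) :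
    (∀ μ : ℝ, f (kthLargest β k) ≤ f μ) ∧
      f (kthLargest β k) = ∑ j ∈ Finset.range k, kthLargest β (j + 1) := by
  have hsplit : ∀ μ, f μ = ∑ i ∈ Finset.range k, (μ + max (kthLargest β (i + 1) - μ) 0)
      + ∑ i ∈ Finset.Ico k n, max (kthLargest β (i + 1) - μ) 0 := by
    intro μ
    rw [hf, sum_kthLargest β (fun x => max (x - μ) 0), Finset.sum_add_distrib,
      ← Finset.sum_range_add_sum_Ico _ hkn]
    simp [add_assoc]
  have hlow : ∀ μ, ∑ j ∈ Finset.range k, kthLargest β (j + 1) ≤ f μ := by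
    intro μ
    rw [hsplit]
    refine le_add_of_le_of_nonneg (Finset.sum_le_sum fun i _ => ?_)
      (Finset.sum_nonneg fun i _ => le_max_right _ _)
    linarith [le_max_left (kthLargest β (i + 1) - μ) 0]
  have heq : f (kthLargest β k) = ∑ j ∈ Finset.range k, kthLargest β (j + 1) := by
    obtain ⟨m, rfl⟩ : ∃ m, k = m + 1 := ⟨k - 1, by omega⟩
    rw [hsplit, Finset.sum_eq_zero (s := Finset.Ico _ _), add_zero]
    · refine Finset.sum_congr rfl fun i hi => ?_
      have hi' := Finset.mem_range.1 hi
      have := kthLargest_anti β (i := i) (j := m) (by omega) (by omega)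
      rw [max_eq_left (by linarith)]
      ring
    · intro i hi
      have hi' := Finset.mem_Ico.1 hi
      have := kthLargest_anti β (i := m) (j := i) (by omega) (by omega)
      exact max_eq_right (by linarith)
  exact ⟨fun μ => heq ▸ hlow μ, heq⟩
end

section
/- Let α⁰ ∈ ℝ^m, β⁰ ∈ ℝ^n, and let k be an integer with 1 ≤ k ≤ n. Suppose C* > 0 and λ*, μ* ∈ ℝ satisfy the system: (a) C* = Σ_{i=1}^m [α_i⁰ − λ*]_+; (b) C* = Σ_{j=1}^n min{[β_j⁰ − μ*]_+, C*/k}; (c) 0 = λ* + μ* + (1/k)·Σ_{j=1}^n [β_j⁰ − μ* − C*/k]_+. Then λ* lies in the open interval (−β_[1]⁰, α_[1]⁰), where α_[1]⁰ is the largest entry of α⁰ and β_[1]⁰ is the largest entry of β⁰. -/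
/-- `kthLargest v 1` is an upper bound of the entries of `v`. -/
lemma le_kthLargest_one {n : ℕ} (v : Fin n → ℝ) (i : Fin n) : v i ≤ kthLargest v 1 := by
  unfold kthLargest
  have hs : ((List.ofFn v).insertionSort (· ≥ ·)).Pairwise (· ≥ ·) :=
    List.pairwise_insertionSort _ _
  have hmem : v i ∈ (List.ofFn v).insertionSort (· ≥ ·) := by
    rw [List.mem_insertionSort, List.mem_ofFn]
    exact ⟨i, rfl⟩
  generalize (List.ofFn v).insertionSort (· ≥ ·) = l at hs hmem
  cases l with
  | nil => simp at hmem
  | cons a t =>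
    rcases List.mem_cons.1 hmem with h | h
    · simp [h]
    · simpa using (List.pairwise_cons.1 hs).1 _ h

/-- bracketing `λ*`: if `C* > 0` and `(C*, λ*, μ*)` solve the KKT system
of the projection onto `Γ_k`, then `λ* ∈ (−β⁰_[1], α⁰_[1])`. -/
theorem kkt_system_brackets_lambda
    (m n k : ℕ) (hm : 1 ≤ m) (hn : 1 ≤ n) (hk1 : 1 ≤ k) (hkn : k ≤ n)
    (α0 : Fin m → ℝ) (β0 : Fin n → ℝ)
    (Cs lam mu : ℝ) (hC : 0 < Cs)
    (ha : Cs = ∑ i, max (α0 i - lam) 0)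
    (hb : Cs = ∑ j, min (max (β0 j - mu) 0) (Cs / k))
    (hc : 0 = lam + mu + (1 / (k : ℝ)) * ∑ j, max (β0 j - mu - Cs / k) 0) :
    -kthLargest β0 1 < lam ∧ lam < kthLargest α0 1 := by
  have hk : (0 : ℝ) < k := by exact_mod_cast hk1
  have hc0 : 0 < Cs / k := div_pos hC hk
  have hCk : Cs = k * (Cs / k) := by field_simp
  constructor
  · have hle := le_kthLargest_one β0
    generalize kthLargest β0 1 = B at hle
    generalize Cs / k = c at *
    have hmu : mu < B := by
      by_contra! h
      have : ∑ j, min (max (β0 j - mu) 0) c ≤ 0 := by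
        refine Finset.sum_nonpos fun j _ => (min_le_left _ _).trans (max_le ?_ le_rfl)
        linarith [hle j]
      linarith
    have key : (∑ j, max (β0 j - mu - c) 0) * c ≤ Cs * max (B - mu - c) 0 := by
      nth_rewrite 1 [hb]
      rw [Finset.sum_mul, Finset.sum_mul]
      refine Finset.sum_le_sum fun j _ => ?_
      rcases le_total (β0 j - mu) c with h | h
      · rw [max_eq_right (by linarith : β0 j - mu - c ≤ 0), zero_mul]
        positivity
      · rw [min_eq_right (h.trans (le_max_left _ _)), mul_comm]
        gcongr
        exact hle j
    have hS : 1 / (k : ℝ) * ∑ j, max (β0 j - mu - c) 0 ≤ max (B - mu - c) 0 := by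
      rw [one_div, inv_mul_le_iff₀ hk]
      refine le_of_mul_le_mul_right (key.trans_eq ?_) hc0
      rw [hCk]
      ring
    have hmax : max (B - mu - c) 0 < B - mu := max_lt (by linarith) (by linarith)
    linarith
  · by_contra! h
    have : ∑ i, max (α0 i - lam) 0 ≤ 0 := by
      refine Finset.sum_nonpos fun i _ => max_le ?_ le_rfl
      linarith [le_kthLargest_one α0 i]
    linarith
end
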